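/- Let α ∈ (0,1) and ρ ∈ (0,1) with ρ̂ := 1 - ρ. Then (Γ(1-αρ)/Γ(αρ̂)) ∫₀¹ u^{-α} (1-u)^{αρ̂-1} (1+u)^{αρ} du - (Γ(1-αρ̂)/Γ(αρ)) ∫₀¹ u^{-α} (1-u)^{αρ} (1+u)^{αρ̂-1} du = Γ(1-αρ) Γ(1-αρ̂). -/

import Mathlib

open MeasureTheory Real Set

/-!
Put `p = 1 - α`. Both integrals belong to the family
`E p q = ∫₀¹ u ^ (p - 1) * (1 - u) ^ (q - 1) * (1 + u) ^ (1 - p - q) du`,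
at `q = α * (1 - ρ)` and at `q = α * ρ + 1`. In each of them `(1 + u) ^ (1 - p - q)` is written
through an integral of `(u + t) ^ (-(p + q))`, over `t ∈ (0, 1)` in the first (with a boundary
term) and over `t > 1` in the second. Feynman's formula evaluates the resulting integral in `u` as
`B(p, q) * t ^ (-q) * (1 + t) ^ (-p)`. After the substitution `t ↦ 1 / t` in the second, both are
multiples of the same incomplete integral over `t ∈ (0, 1)`; these multiples cancel in the
difference, and only the boundary term, a complete beta integral, survives.
-/

section

open ProbabilityTheory (beta beta_pos beta_eq_betaIntegralReal)

variable {p q : ℝ}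

theorem integral_Ioo_rpow_mul_one_sub_rpow (hp : 0 < p) (hq : 0 < q) :
    ∫ u in Ioo (0 : ℝ) 1, u ^ (p - 1) * (1 - u) ^ (q - 1) = beta p q := by
  rw [← Complex.ofReal_re (∫ u in Ioo (0 : ℝ) 1, _), beta_eq_betaIntegralReal p q hp hq,
    Complex.betaIntegral, intervalIntegral.integral_of_le zero_le_one, integral_Ioc_eq_integral_Ioo,
    ← integral_complex_ofReal]
  congr 1
  refine setIntegral_congr_fun measurableSet_Ioo fun u hu ↦ ?_
  simp only [Complex.ofReal_mul, Complex.ofReal_cpow hu.1.le,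
    Complex.ofReal_cpow (sub_nonneg.2 hu.2.le), Complex.ofReal_sub, Complex.ofReal_one]

-- A function with nonzero Bochner integral is integrable, so integrability comes from the value.
theorem integrableOn_Ioo_rpow_mul_one_sub_rpow (hp : 0 < p) (hq : 0 < q) :
    IntegrableOn (fun u : ℝ ↦ u ^ (p - 1) * (1 - u) ^ (q - 1)) (Ioo 0 1) :=
  .of_integral_ne_zero <| by
    rw [integral_Ioo_rpow_mul_one_sub_rpow hp hq]
    exact (beta_pos hp hq).ne'

/-! ### Feynman's formula -/

/-- The Möbius transformation that fixes `0` and `1` and sends the ratio `u : 1 - u` to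
`x * u : y * (1 - u)`. It is the substitution behind Feynman's parametrization of
`x ^ (-p) * y ^ (-q)`. -/
noncomputable def feynmanMap (x y u : ℝ) : ℝ := x * u / (x * u + y * (1 - u))

namespace feynmanMap

variable {x y u : ℝ}

theorem denom_pos (hx : 0 < x) (hy : 0 < y) (hu : u ∈ Ioo (0 : ℝ) 1) :
    0 < x * u + y * (1 - u) :=
  add_pos (mul_pos hx hu.1) (mul_pos hy (sub_pos.2 hu.2))

theorem one_sub (hx : 0 < x) (hy : 0 < y) (hu : u ∈ Ioo (0 : ℝ) 1) :
    1 - feynmanMap x y u = y * (1 - u) / (x * u + y * (1 - u)) := by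
  have := (denom_pos hx hy hu).ne'
  rw [feynmanMap]
  field_simp
  ring

theorem mapsTo (hx : 0 < x) (hy : 0 < y) : MapsTo (feynmanMap x y) (Ioo 0 1) (Ioo 0 1) := by
  intro u hu
  have hD := denom_pos hx hy hu
  refine ⟨div_pos (mul_pos hx hu.1) hD, sub_pos.1 ?_⟩
  rw [one_sub hx hy hu]
  exact div_pos (mul_pos hy (sub_pos.2 hu.2)) hD

theorem leftInvOn (hx : 0 < x) (hy : 0 < y) :
    LeftInvOn (feynmanMap y x) (feynmanMap x y) (Ioo 0 1) := by
  intro u hu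
  have hD := (denom_pos hx hy hu).ne'
  rw [feynmanMap, one_sub hx hy hu, feynmanMap]
  field_simp
  ring

theorem bijOn (hx : 0 < x) (hy : 0 < y) : BijOn (feynmanMap x y) (Ioo 0 1) (Ioo 0 1) :=
  InvOn.bijOn ⟨leftInvOn hx hy, leftInvOn hy hx⟩ (mapsTo hx hy) (mapsTo hy hx)

theorem hasDerivAt (hx : 0 < x) (hy : 0 < y) (hu : u ∈ Ioo (0 : ℝ) 1) :
    HasDerivAt (feynmanMap x y) (x * y / (x * u + y * (1 - u)) ^ 2) u := by
  have hnum : HasDerivAt (fun u : ℝ ↦ x * u) x u := hasDerivAt_const_mul x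
  have hden : HasDerivAt (fun u : ℝ ↦ x * u + y * (1 - u)) (x + y * (-1)) u :=
    hnum.add (((hasDerivAt_id u).const_sub 1).const_mul y)
  refine (hnum.div hden (denom_pos hx hy hu).ne').congr_deriv ?_
  congr 1
  ring

end feynmanMap

theorem integral_Ioo_rpow_mul_one_sub_rpow_mul_feynman {x y : ℝ} (hp : 0 < p) (hq : 0 < q)
    (hx : 0 < x) (hy : 0 < y) :
    ∫ u in Ioo (0 : ℝ) 1,
        u ^ (p - 1) * (1 - u) ^ (q - 1) * (x * u + y * (1 - u)) ^ (-(p + q)) =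
      beta p q * (x ^ (-p) * y ^ (-q)) := by
  have hsubst := integral_image_eq_integral_abs_deriv_smul measurableSet_Ioo
    (fun u hu ↦ (feynmanMap.hasDerivAt hx hy hu).hasDerivWithinAt) (feynmanMap.bijOn hx hy).injOn
    fun v ↦ v ^ (p - 1) * (1 - v) ^ (q - 1)
  rw [(feynmanMap.bijOn hx hy).image_eq, integral_Ioo_rpow_mul_one_sub_rpow hp hq] at hsubst
  rw [hsubst, ← integral_mul_const]
  refine setIntegral_congr_fun measurableSet_Ioo fun u hu ↦ ?_
  have hu₀ := hu.1
  have hu₁ : 0 < 1 - u := sub_pos.2 hu.2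
  have hD := feynmanMap.denom_pos hx hy hu
  simp only [feynmanMap.one_sub hx hy hu, smul_eq_mul]
  rw [feynmanMap, abs_of_pos (by positivity)]
  generalize x * u + y * (1 - u) = D at hD
  rw [div_rpow (by positivity) hD.le, div_rpow (by positivity) hD.le, mul_rpow hx.le hu₀.le,
    mul_rpow hy.le hu₁.le, rpow_neg hx.le, rpow_neg hy.le, rpow_neg hD.le, rpow_add hD,
    rpow_sub_one hx.ne', rpow_sub_one hy.ne', rpow_sub_one hD.ne', rpow_sub_one hD.ne']
  field_simp

theorem integral_Ioo_rpow_mul_one_sub_rpow_mul_add_rpow {t : ℝ} (hp : 0 < p) (hq : 0 < q)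
    (ht : 0 < t) :
    ∫ u in Ioo (0 : ℝ) 1, u ^ (p - 1) * (1 - u) ^ (q - 1) * (u + t) ^ (-(p + q)) =
      beta p q * (t ^ (-q) * (1 + t) ^ (-p)) := by
  rw [mul_comm (t ^ (-q)),
    ← integral_Ioo_rpow_mul_one_sub_rpow_mul_feynman hp hq (add_pos one_pos ht) ht]
  refine setIntegral_congr_fun measurableSet_Ioo fun u _ ↦ ?_
  ring_nf

section Mixture

variable {μ : Measure ℝ}

theorem integrable_prod_rpow_mul_one_sub_rpow_mul_add_rpow [SFinite μ] (hp : 0 < p) (hq : 0 < q)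
    (hμ : ∀ᵐ t ∂μ, 0 < t) (hint : Integrable (fun t ↦ t ^ (-q) * (1 + t) ^ (-p)) μ) :
    Integrable (fun z : ℝ × ℝ ↦ z.1 ^ (p - 1) * (1 - z.1) ^ (q - 1) * (z.1 + z.2) ^ (-(p + q)))
      ((volume.restrict (Ioo 0 1)).prod μ) := by
  refine (integrable_prod_iff' (Measurable.aestronglyMeasurable (by fun_prop))).2 ⟨?_, ?_⟩
  · filter_upwards [hμ] with t ht
    refine .of_integral_ne_zero ?_
    rw [integral_Ioo_rpow_mul_one_sub_rpow_mul_add_rpow hp hq ht]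
    have := beta_pos hp hq
    positivity
  · refine (hint.const_mul (beta p q)).congr ?_
    filter_upwards [hμ] with t ht
    rw [← integral_Ioo_rpow_mul_one_sub_rpow_mul_add_rpow hp hq ht]
    refine setIntegral_congr_fun measurableSet_Ioo fun u hu ↦ ?_
    have hu₀ := hu.1
    have hu₁ : 0 < 1 - u := sub_pos.2 hu.2
    exact (norm_of_nonneg (by positivity)).symm

theorem integrableOn_Ioo_rpow_mul_one_sub_rpow_mul_integral_add_rpow [SFinite μ] (hp : 0 < p)
    (hq : 0 < q) (hμ : ∀ᵐ t ∂μ, 0 < t)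
    (hint : Integrable (fun t ↦ t ^ (-q) * (1 + t) ^ (-p)) μ) :
    IntegrableOn (fun u ↦ u ^ (p - 1) * (1 - u) ^ (q - 1) * ∫ t, (u + t) ^ (-(p + q)) ∂μ)
      (Ioo 0 1) := by
  simpa only [IntegrableOn, integral_const_mul] using
    (integrable_prod_rpow_mul_one_sub_rpow_mul_add_rpow hp hq hμ hint).integral_prod_left

theorem integral_Ioo_rpow_mul_one_sub_rpow_mul_integral_add_rpow [SFinite μ] (hp : 0 < p)
    (hq : 0 < q) (hμ : ∀ᵐ t ∂μ, 0 < t)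
    (hint : Integrable (fun t ↦ t ^ (-q) * (1 + t) ^ (-p)) μ) :
    ∫ u in Ioo (0 : ℝ) 1, u ^ (p - 1) * (1 - u) ^ (q - 1) * ∫ t, (u + t) ^ (-(p + q)) ∂μ =
      beta p q * ∫ t, t ^ (-q) * (1 + t) ^ (-p) ∂μ := by
  simp_rw [← integral_const_mul]
  rw [integral_integral_swap (integrable_prod_rpow_mul_one_sub_rpow_mul_add_rpow hp hq hμ hint)]
  refine integral_congr_ae ?_
  filter_upwards [hμ] with t ht
  exact integral_Ioo_rpow_mul_one_sub_rpow_mul_add_rpow hp hq ht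

end Mixture

/-! ### Incomplete beta integrals of the second kind -/

/-- The incomplete beta integral of the second kind `∫₀¹ t ^ (s - 1) * (1 + t) ^ (-p) dt`, whose
completion over `(0, ∞)` is the beta function at `(s, p - s)`. -/
noncomputable def incompleteBetaPrime (s p : ℝ) : ℝ :=
  ∫ t in Ioo (0 : ℝ) 1, t ^ (s - 1) * (1 + t) ^ (-p)

theorem integrableOn_Ioo_rpow_mul_one_add_rpow (hp : 0 ≤ p) (hq : q < 1) :
    IntegrableOn (fun t : ℝ ↦ t ^ (-q) * (1 + t) ^ (-p)) (Ioo 0 1) := by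
  have hdom : IntegrableOn (fun t : ℝ ↦ t ^ (-q)) (Ioo 0 1) :=
    (intervalIntegral.integrableOn_Ioo_rpow_iff one_pos).2 (by linarith)
  refine hdom.mono' (Measurable.aestronglyMeasurable (by fun_prop))
    (ae_restrict_of_forall_mem measurableSet_Ioo fun t ht ↦ ?_)
  have ht₀ := ht.1
  rw [norm_of_nonneg (by positivity)]
  exact mul_le_of_le_one_right (by positivity)
    (rpow_le_one_of_one_le_of_nonpos (by linarith) (by linarith))

theorem integrableOn_Ioi_rpow_mul_one_add_rpow (hp : 0 ≤ p) (hpq : 1 < p + q) :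
    IntegrableOn (fun t : ℝ ↦ t ^ (-q) * (1 + t) ^ (-p)) (Ioi 1) := by
  have hdom : IntegrableOn (fun t : ℝ ↦ t ^ (-q + -p)) (Ioi 1) :=
    integrableOn_Ioi_rpow_of_lt (by linarith) one_pos
  refine hdom.mono' (Measurable.aestronglyMeasurable (by fun_prop))
    (ae_restrict_of_forall_mem measurableSet_Ioi fun t ht ↦ ?_)
  have ht₀ : 0 < t := one_pos.trans ht
  rw [norm_of_nonneg (by positivity), rpow_add ht₀]
  exact mul_le_mul_of_nonneg_left
    (rpow_le_rpow_of_nonpos ht₀ (by linarith) (by linarith)) (by positivity)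

theorem integral_Ioi_one_eq_integral_Ioo_inv {E : Type*} [NormedAddCommGroup E] [NormedSpace ℝ E]
    (f : ℝ → E) : ∫ t in Ioi (1 : ℝ), f t = ∫ t in Ioo (0 : ℝ) 1, (t ^ 2)⁻¹ • f t⁻¹ := by
  have himage : Inv.inv '' Ioo (0 : ℝ) 1 = Ioi 1 := by
    rw [image_inv_eq_inv, inv_Ioo_0_left one_pos, inv_one]
  have hderiv (t : ℝ) (ht : t ∈ Ioo (0 : ℝ) 1) :
      HasDerivWithinAt Inv.inv (-(t ^ 2)⁻¹) (Ioo 0 1) t :=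
    (hasDerivAt_inv ht.1.ne').hasDerivWithinAt
  have hanti : AntitoneOn (Inv.inv : ℝ → ℝ) (Ioo 0 1) :=
    inv_antitoneOn_Ioi.mono Ioo_subset_Ioi_self
  rw [← himage, integral_image_eq_integral_deriv_smul_of_antitoneOn measurableSet_Ioo hderiv hanti]
  simp only [neg_neg]

theorem integral_Ioi_rpow_mul_one_add_rpow (p q : ℝ) :
    ∫ t in Ioi (1 : ℝ), t ^ (-q) * (1 + t) ^ (-p) = incompleteBetaPrime (p + q - 1) p := by
  rw [integral_Ioi_one_eq_integral_Ioo_inv, incompleteBetaPrime]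
  refine setIntegral_congr_fun measurableSet_Ioo fun t ht ↦ ?_
  have ht₀ := ht.1
  have hadd : 1 + t⁻¹ = (1 + t) / t := by field_simp; ring
  have hexp : t ^ (p + q - 1 - 1) = t ^ q * t ^ p / t ^ 2 := by
    rw [show p + q - 1 - 1 = q + p - (2 : ℕ) by push_cast; ring, rpow_sub_natCast ht₀.ne',
      rpow_add ht₀]
  simp only [smul_eq_mul]
  rw [hadd, hexp, div_rpow (by positivity) ht₀.le, inv_rpow ht₀.le, rpow_neg ht₀.le,
    rpow_neg ht₀.le, inv_inv]
  field_simp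

/-! ### Euler integrals at `-1` -/

/-- Euler's integral at the argument `-1`: the integral of
`u ^ (p - 1) * (1 - u) ^ (q - 1) * (1 + u) ^ (1 - p - q)` over `(0, 1)`, which in hypergeometric
notation is `B(p, q) * ₂F₁(p + q - 1, p; p + q; -1)`. -/
noncomputable def eulerIntegral (p q : ℝ) : ℝ :=
  ∫ u in Ioo (0 : ℝ) 1, u ^ (p - 1) * (1 - u) ^ (q - 1) * (1 + u) ^ (1 - p - q)

theorem mul_integral_Ioo_add_rpow {x : ℝ} (hx : 0 < x) (r : ℝ) :
    r * ∫ t in Ioo (0 : ℝ) 1, (x + t) ^ (r - 1) = (1 + x) ^ r - x ^ r := by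
  rcases eq_or_ne r 0 with rfl | hr
  · simp
  have hmem : (0 : ℝ) ∉ uIcc x (x + 1) := by
    rw [uIcc_of_le (by linarith)]
    exact fun h ↦ hx.not_ge h.1
  rw [← integral_Ioc_eq_integral_Ioo, ← intervalIntegral.integral_of_le zero_le_one,
    intervalIntegral.integral_comp_add_left (fun s ↦ s ^ (r - 1)), add_zero,
    integral_rpow (Or.inr ⟨by simpa [sub_eq_iff_eq_add] using hr, hmem⟩), sub_add_cancel,
    mul_div_cancel₀ _ hr, add_comm x]

theorem mul_integral_Ioi_add_rpow {x r : ℝ} (hx : -1 < x) (hr : r < 0) :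
    -r * ∫ t in Ioi (1 : ℝ), (x + t) ^ (r - 1) = (1 + x) ^ r := by
  have hshift : ∫ t in Ioi (1 : ℝ), (x + t) ^ (r - 1) = ∫ s in Ioi (1 + x), s ^ (r - 1) := by
    simpa only [preimage_const_add_Ioi, add_sub_cancel_right] using
      (measurePreserving_add_left volume x).setIntegral_preimage_emb
        (measurableEmbedding_addLeft x) (fun s ↦ s ^ (r - 1)) (Ioi (1 + x))
  rw [hshift, integral_Ioi_rpow_of_lt (by linarith) (by linarith), sub_add_cancel,
    mul_div_assoc', neg_mul_neg, mul_div_cancel_left₀ _ hr.ne]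

theorem eulerIntegral_eq_of_lt_one (hp : 0 < p) (hq : 0 < q) (hq₁ : q < 1) :
    eulerIntegral p q =
      beta (1 - q) q + (1 - p - q) * (beta p q * incompleteBetaPrime (1 - q) p) := by
  have hpos : ∀ᵐ t ∂volume.restrict (Ioo (0 : ℝ) 1), 0 < t :=
    ae_restrict_of_forall_mem measurableSet_Ioo fun _ ht ↦ ht.1
  have hint := integrableOn_Ioo_rpow_mul_one_add_rpow hp.le hq₁
  rw [incompleteBetaPrime, sub_sub_cancel_left,
    ← integral_Ioo_rpow_mul_one_sub_rpow_mul_integral_add_rpow hp hq hpos hint,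
    ← integral_Ioo_rpow_mul_one_sub_rpow (sub_pos.2 hq₁) hq, ← integral_const_mul,
    ← integral_add (integrableOn_Ioo_rpow_mul_one_sub_rpow (sub_pos.2 hq₁) hq)
      ((integrableOn_Ioo_rpow_mul_one_sub_rpow_mul_integral_add_rpow hp hq hpos hint).const_mul _),
    eulerIntegral]
  refine setIntegral_congr_fun measurableSet_Ioo fun u hu ↦ ?_
  have hkernel := mul_integral_Ioo_add_rpow hu.1 (1 - p - q)
  have hboundary : u ^ (p - 1) * u ^ (1 - p - q) = u ^ (1 - q - 1) := by
    rw [← rpow_add hu.1]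
    ring_nf
  rw [show 1 - p - q - 1 = -(p + q) by ring] at hkernel
  linear_combination (1 - u) ^ (q - 1) * hboundary - u ^ (p - 1) * (1 - u) ^ (q - 1) * hkernel

theorem eulerIntegral_eq_of_one_lt_add (hp : 0 < p) (hq : 0 < q) (hpq : 1 < p + q) :
    eulerIntegral p q = (p + q - 1) * (beta p q * incompleteBetaPrime (p + q - 1) p) := by
  have hpos : ∀ᵐ t ∂volume.restrict (Ioi (1 : ℝ)), 0 < t :=
    ae_restrict_of_forall_mem measurableSet_Ioi fun _ ht ↦ one_pos.trans ht
  rw [← integral_Ioi_rpow_mul_one_add_rpow,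
    ← integral_Ioo_rpow_mul_one_sub_rpow_mul_integral_add_rpow hp hq hpos
      (integrableOn_Ioi_rpow_mul_one_add_rpow hp.le hpq), ← integral_const_mul, eulerIntegral]
  refine setIntegral_congr_fun measurableSet_Ioo fun u hu ↦ ?_
  have hkernel := mul_integral_Ioi_add_rpow (x := u) (r := 1 - p - q) (by linarith [hu.1])
    (by linarith)
  rw [show 1 - p - q - 1 = -(p + q) by ring] at hkernel
  linear_combination -(u ^ (p - 1) * (1 - u) ^ (q - 1)) * hkernel

theorem beta_one_sub_self (q : ℝ) : beta (1 - q) q = Gamma (1 - q) * Gamma q := by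
  rw [beta, sub_add_cancel, Gamma_one, div_one]

theorem Gamma_add_div_Gamma_mul_beta (hpq : Gamma (p + q) ≠ 0) (hq : Gamma q ≠ 0) :
    Gamma (p + q) / Gamma q * beta p q = Gamma p := by
  rw [beta]
  field_simp

theorem Gamma_div_Gamma_mul_eulerIntegral_of_lt_one (hp : 0 < p) (hq : 0 < q) (hq₁ : q < 1) :
    Gamma (p + q) / Gamma q * eulerIntegral p q =
      Gamma (p + q) * Gamma (1 - q) +
        (1 - p - q) * (Gamma p * incompleteBetaPrime (1 - q) p) := by
  have hΓq := (Gamma_pos_of_pos hq).ne'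
  have hbeta := Gamma_add_div_Gamma_mul_beta (Gamma_pos_of_pos (add_pos hp hq)).ne' hΓq
  rw [eulerIntegral_eq_of_lt_one hp hq hq₁, beta_one_sub_self, ← hbeta]
  field_simp

theorem Gamma_div_Gamma_mul_eulerIntegral_of_one_lt_add (hp : 0 < p) (hq : 0 < q) (hq₁ : q ≠ 1)
    (hpq : 1 < p + q) :
    Gamma (p + q - 1) / Gamma (q - 1) * eulerIntegral p q =
      (q - 1) * (Gamma p * incompleteBetaPrime (p + q - 1) p) := by
  have hΓq := (Gamma_pos_of_pos hq).ne'
  have hbeta := Gamma_add_div_Gamma_mul_beta (Gamma_pos_of_pos (add_pos hp hq)).ne' hΓq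
  have hrec : Gamma q = (q - 1) * Gamma (q - 1) := by
    simpa using Gamma_add_one (sub_ne_zero.2 hq₁)
  have hrec' : Gamma (p + q) = (p + q - 1) * Gamma (p + q - 1) := by
    simpa using Gamma_add_one (sub_pos.2 hpq).ne'
  rw [hrec] at hΓq
  rw [eulerIntegral_eq_of_one_lt_add hp hq hpq, ← hbeta, hrec, hrec']
  field_simp [left_ne_zero_of_mul hΓq, right_ne_zero_of_mul hΓq]

theorem stmt_9_general (α ρ : ℝ) (hα : α < 1) (hρ : ρ ≠ 0) (hαρ : -1 < α * ρ)
    (hαρ' : α * (1 - ρ) ∈ Ioo (0 : ℝ) 1) :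
    (Real.Gamma (1 - α * ρ) / Real.Gamma (α * (1 - ρ))) *
        (∫ u in Ioo (0:ℝ) 1,
          u ^ (-α) * (1 - u) ^ (α * (1 - ρ) - 1) * (1 + u) ^ (α * ρ))
      - (Real.Gamma (1 - α * (1 - ρ)) / Real.Gamma (α * ρ)) *
        (∫ u in Ioo (0:ℝ) 1,
          u ^ (-α) * (1 - u) ^ (α * ρ) * (1 + u) ^ (α * (1 - ρ) - 1))
      = Real.Gamma (1 - α * ρ) * Real.Gamma (1 - α * (1 - ρ)) := by
  obtain ⟨hb, hb₁⟩ := hαρ'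
  have hp : 0 < 1 - α := sub_pos.2 hα
  have ha : α * ρ ≠ 0 := mul_ne_zero (left_ne_zero_of_mul hb.ne') hρ
  have hfirst := Gamma_div_Gamma_mul_eulerIntegral_of_lt_one hp hb hb₁
  have hsecond := Gamma_div_Gamma_mul_eulerIntegral_of_one_lt_add (q := α * ρ + 1) hp
    (by linarith) (by simpa using ha) (by linarith)
  rw [eulerIntegral, show 1 - α + α * (1 - ρ) = 1 - α * ρ by ring, show 1 - α - 1 = -α by ring,
    show 1 - (1 - α) - α * (1 - ρ) = α * ρ by ring] at hfirst
  rw [eulerIntegral, show 1 - α + (α * ρ + 1) - 1 = 1 - α * (1 - ρ) by ring,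
    show 1 - α - 1 = -α by ring, add_sub_cancel_right,
    show 1 - (1 - α) - (α * ρ + 1) = α * (1 - ρ) - 1 by ring] at hsecond
  rw [hfirst, hsecond]
  ring

end

theorem stmt_9 (α ρ : ℝ) (hα : α ∈ Ioo (0:ℝ) 1) (hρ : ρ ∈ Ioo (0:ℝ) 1) :
    (Real.Gamma (1 - α * ρ) / Real.Gamma (α * (1 - ρ))) *
        (∫ u in Ioo (0:ℝ) 1,
          u ^ (-α) * (1 - u) ^ (α * (1 - ρ) - 1) * (1 + u) ^ (α * ρ))
      - (Real.Gamma (1 - α * (1 - ρ)) / Real.Gamma (α * ρ)) *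
        (∫ u in Ioo (0:ℝ) 1,
          u ^ (-α) * (1 - u) ^ (α * ρ) * (1 + u) ^ (α * (1 - ρ) - 1))
      = Real.Gamma (1 - α * ρ) * Real.Gamma (1 - α * (1 - ρ)) := by
  have hρ' : 1 - ρ ∈ Ioo (0 : ℝ) 1 := ⟨sub_pos.2 hρ.2, sub_lt_self 1 hρ.1⟩
  exact stmt_9_general α ρ hα.2 hρ.1.ne' (by linarith [mul_pos hα.1 hρ.1])
    ⟨mul_pos hα.1 hρ'.1, mul_lt_one_of_nonneg_of_lt_one_left hα.1.le hα.2 hρ'.2.le⟩
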